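/- Let ℓ be an odd prime and n a natural number. The number of finitely supported functions w which assign to each quadruple (a, x, 𝔠, j) — where a ∈ ℕ, x ∈ {0,1}, 𝔠 ∈ 𝒞 and 1 ≤ j ≤ (ℓ−1)^{t(𝔠)} — an ℓ-core partition w(a, x, 𝔠, j), subject to the condition Σ_{(a,x,𝔠,j)} ℓ^{a+|𝔠|} · |w(a,x,𝔠,j)| = n, is equal to the number of bipartitions of n. (This is the combinatorial content of the weight count for the fusion systems of the compact Lie groups Sp(n) and SO(2n+1) at an odd prime ℓ: the number of weights equals |Irr(W(B_n))|.) -/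

import Mathlib

/-- The sum `|𝔠| = c₁ + ⋯ + c_t` of a finite sequence `𝔠` of strictly positive integers. -/
def csum (c : List ℕ+) : ℕ := (c.map fun x => (x : ℕ)).sum

/-- The beta-set (set of first-column hook lengths) of a partition `p`, computed with `N`
beads: if the parts of `p` in decreasing order (padded with zeros to length `N`) are
`λ₁ ≥ λ₂ ≥ … ≥ λ_N`, then `betaSet p N = {λ₁ + N - 1, λ₂ + N - 2, …, λ_N}`. -/
def betaSet {n : ℕ} (p : Nat.Partition n) (N : ℕ) : Finset ℕ :=
  (Finset.range N).image fun i => ((p.parts.sort (· ≥ ·)).getD i 0) + (N - 1 - i)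

/-- A partition is an `ℓ`-core if (for every `N` at least the number of parts) its beta-set
`B` on `N` beads satisfies: every `b ∈ B` with `b ≥ ℓ` has `b - ℓ ∈ B`.  This is equivalent
to the Young diagram having no hook of length `ℓ`. -/
def IsCore (ℓ : ℕ) {n : ℕ} (p : Nat.Partition n) : Prop :=
  ∀ N : ℕ, Multiset.card p.parts ≤ N →
    ∀ b ∈ betaSet p N, ℓ ≤ b → b - ℓ ∈ betaSet p N

/-!
Sliding the beads of an `ℓ`-runner abacus down their runners turns a partition `λ` into its
`ℓ`-core, and reading each runner as a beta-set gives its `ℓ`-quotient `(λ⁰, …, λ^(ℓ-1))`. Core and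
quotient may be prescribed arbitrarily and determine `λ`, and `|λ| = |core| + ℓ * ∑ |λʳ|`. Taking
quotients again and again replaces a partition by its core tower: a finitely supported family of
`ℓ`-cores indexed by the words over an alphabet of `ℓ` letters, in which a word of length `d`
contributes to the size with weight `ℓ ^ d`.

The labels `(a, 𝔠, j)` with `a + |𝔠| = d` are the words of length `d`: fix one letter and cut a word
before each occurrence of one of the other `ℓ - 1` letters. Then `a` is the length of the initial
piece, the lengths of the remaining pieces form `𝔠`, and their first letters are the digits of `j`.
A pair of core towers, one for each `x`, is therefore a function `w` as in the theorem.
-/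

/-- A partition of some natural number: `p.1` is its size `|p|` and `p.2.parts` its parts. -/
abbrev IntPartition := Σ m : ℕ, Nat.Partition m

namespace IntPartition

/-- The sequence of parts `λ₁ ≥ λ₂ ≥ …` of a partition, indexed from `0` and padded with zeros. -/
def row (p : IntPartition) (i : ℕ) : ℕ := (p.2.parts.sort (· ≥ ·)).getD i 0

theorem ext_parts {p q : IntPartition} (h : p.2.parts = q.2.parts) : p = q := by
  obtain ⟨m, p⟩ := p
  obtain ⟨k, q⟩ := q
  obtain rfl : m = k := by rw [← p.parts_sum, ← q.parts_sum, h]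
  exact congrArg (Sigma.mk m) (Nat.Partition.ext h)

theorem eq_of_size_eq_zero {p q : IntPartition} (hp : p.1 = 0) (hq : q.1 = 0) : p = q := by
  obtain ⟨m, p⟩ := p
  obtain ⟨k, q⟩ := q
  subst hp hq
  exact congrArg (Sigma.mk 0) (Subsingleton.elim p q)

theorem card_parts_le_size (p : IntPartition) : p.2.parts.card ≤ p.1 := by
  simpa [p.2.parts_sum] using
    Multiset.card_nsmul_le_sum (s := p.2.parts) (a := 1) fun _ hx => p.2.parts_pos hx

theorem row_eq_zero (p : IntPartition) {i : ℕ} (h : p.2.parts.card ≤ i) : p.row i = 0 :=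
  List.getD_eq_default _ _ (by simpa using h)

theorem antitone_row (p : IntPartition) : Antitone p.row := by
  intro i j hij
  rcases le_or_gt p.2.parts.card j with hj | hj
  · simp [row_eq_zero p hj]
  · have hj' : j < (p.2.parts.sort (· ≥ ·)).length := by simpa using hj
    rw [row, row, List.getD_eq_getElem _ _ hj', List.getD_eq_getElem _ _ (hij.trans_lt hj')]
    exact (Multiset.pairwise_sort p.2.parts (· ≥ ·)).rel_get_of_le (a := ⟨i, _⟩) (b := ⟨j, _⟩) hij

theorem map_row_range (p : IntPartition) {N : ℕ} (h : p.2.parts.card ≤ N) :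
    (Multiset.range N).map p.row = p.2.parts + Multiset.replicate (N - p.2.parts.card) 0 := by
  have hlist : (List.range N).map p.row =
      p.2.parts.sort (· ≥ ·) ++ List.replicate (N - p.2.parts.card) 0 := by
    refine List.ext_getElem (by simp [h]) fun i _ _ => ?_
    simp only [List.getElem_map, List.getElem_range, List.getElem_append, row]
    split_ifs with hi
    · exact List.getD_eq_getElem _ _ hi
    · simpa using List.getD_eq_default _ _ (not_lt.1 hi)
  calc (Multiset.range N).map p.row = ((List.range N).map p.row : List ℕ) := rfl
    _ = p.2.parts + Multiset.replicate (N - p.2.parts.card) 0 := by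
      rw [hlist, ← Multiset.coe_add, Multiset.sort_eq, Multiset.coe_replicate]

theorem sum_row_range (p : IntPartition) {N : ℕ} (h : p.2.parts.card ≤ N) :
    ∑ i ∈ Finset.range N, p.row i = p.1 := by
  simpa [p.2.parts_sum, Finset.sum] using congrArg Multiset.sum (p.map_row_range h)

theorem ext_row {p q : IntPartition} {N : ℕ} (hp : p.2.parts.card ≤ N) (hq : q.2.parts.card ≤ N)
    (h : Set.EqOn p.row q.row (Set.Iio N)) : p = q := by
  have hparts : ∀ r : IntPartition, r.2.parts.card ≤ N →
      ((Multiset.range N).map r.row).filter (· ≠ 0) = r.2.parts := fun r hr => by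
    rw [r.map_row_range hr, Multiset.filter_add,
      Multiset.filter_eq_self.2 fun _ ha => (r.2.parts_pos ha).ne',
      Multiset.filter_eq_nil.2 fun _ ha => not_not.2 (Multiset.eq_of_mem_replicate ha), add_zero]
  refine ext_parts ?_
  rw [← hparts p hp, ← hparts q hq, Multiset.map_congr rfl fun i hi => h (Multiset.mem_range.1 hi)]

end IntPartition

theorem eqOn_of_antitoneOn_of_map_range_eq {α : Type*} [PartialOrder α] {f g : ℕ → α} {N : ℕ}
    (hf : AntitoneOn f (Set.Iio N)) (hg : AntitoneOn g (Set.Iio N))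
    (h : (Multiset.range N).map f = (Multiset.range N).map g) : Set.EqOn f g (Set.Iio N) := by
  have sorted : ∀ {u : ℕ → α}, AntitoneOn u (Set.Iio N) →
      ((List.range N).map u).Pairwise (· ≥ ·) := fun hu =>
    List.pairwise_map.2 <| List.pairwise_lt_range.imp_of_mem fun hi hj hij =>
      hu (List.mem_range.1 hi) (List.mem_range.1 hj) hij.le
  have hperm : ((List.range N).map f).Perm ((List.range N).map g) := Multiset.coe_eq_coe.1 h
  have hlist := hperm.eq_of_pairwise' (sorted hf) (sorted hg)
  exact fun i hi => List.map_inj_left.1 hlist i (List.mem_range.2 hi)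

/-! ### Beta-sets -/

section BetaSet

open IntPartition

theorem strictAntiOn_bead (p : IntPartition) (N : ℕ) :
    StrictAntiOn (fun i => p.row i + (N - 1 - i)) (Set.Iio N) := by
  intro i _ j hj hij
  have := p.antitone_row hij.le
  simp only [Set.mem_Iio] at hj
  dsimp only
  omega

theorem betaSet_val (p : IntPartition) (N : ℕ) :
    (betaSet p.2 N).val = (Multiset.range N).map fun i => p.row i + (N - 1 - i) := by
  refine Finset.image_val_of_injOn ?_
  rw [Finset.coe_range]
  exact (strictAntiOn_bead p N).injOn

theorem card_betaSet (p : IntPartition) (N : ℕ) : (betaSet p.2 N).card = N := by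
  simpa using congrArg Multiset.card (betaSet_val p N)

theorem sum_betaSet (p : IntPartition) {N : ℕ} (h : p.2.parts.card ≤ N) :
    ∑ b ∈ betaSet p.2 N, b = p.1 + ∑ i ∈ Finset.range N, i :=
  calc ∑ b ∈ betaSet p.2 N, b = ∑ i ∈ Finset.range N, (p.row i + (N - 1 - i)) := by
        rw [Finset.sum_eq_multiset_sum, Multiset.map_id', betaSet_val]; rfl
    _ = p.1 + ∑ i ∈ Finset.range N, i := by
        rw [Finset.sum_add_distrib, sum_row_range p h, Finset.sum_range_reflect fun i => i]

theorem eq_of_betaSet_eq {p q : IntPartition} {N : ℕ} (hp : p.2.parts.card ≤ N)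
    (hq : q.2.parts.card ≤ N) (h : betaSet p.2 N = betaSet q.2 N) : p = q := by
  refine ext_row hp hq fun i hi => ?_
  have hbead := eqOn_of_antitoneOn_of_map_range_eq (strictAntiOn_bead p N).antitoneOn
    (strictAntiOn_bead q N).antitoneOn (by rw [← betaSet_val, ← betaSet_val, h]) hi
  exact Nat.add_right_cancel hbead

/-- The partition whose beta-set on `B.card` beads is `B`: each bead `b ∈ B` contributes a part
equal to the number of unoccupied positions below `b`. -/
def ofBeads (B : Finset ℕ) : IntPartition :=
  ⟨_, Nat.Partition.ofMultiset (B.val.map (Nat.count (· ∉ B)))⟩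

theorem card_parts_ofBeads_le (B : Finset ℕ) : (ofBeads B).2.parts.card ≤ B.card := by
  simpa [ofBeads] using
    Multiset.card_le_card (Multiset.filter_le (· ≠ 0) (B.val.map (Nat.count (· ∉ B))))

theorem map_row_ofBeads (B : Finset ℕ) :
    (Multiset.range B.card).map (ofBeads B).row = B.val.map (Nat.count (· ∉ B)) := by
  set s := B.val.map (Nat.count (· ∉ B)) with hs
  have hparts : (ofBeads B).2.parts = s.filter (· ≠ 0) := by simp [ofBeads, hs]
  have hzeros : s.filter (¬ · ≠ 0) = Multiset.replicate (B.card - (s.filter (· ≠ 0)).card) 0 := by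
    have hcard := congrArg Multiset.card (Multiset.filter_add_not (· ≠ 0) s)
    refine Multiset.eq_replicate.2 ⟨?_, fun b hb => not_not.1 (Multiset.mem_filter.1 hb).2⟩
    simp only [Multiset.card_add, hs, Multiset.card_map, Finset.card_val] at hcard ⊢
    omega
  rw [map_row_range _ (card_parts_ofBeads_le B), hparts, ← hzeros, Multiset.filter_add_not]

theorem count_notMem_add_count_mem (B : Finset ℕ) (b : ℕ) :
    Nat.count (· ∉ B) b + Nat.count (· ∈ B) b = b := by
  have := Finset.card_filter_add_card_filter_not (s := Finset.range b) (· ∈ B)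
  simp only [Nat.count_eq_card_filter_range, Finset.card_range] at this ⊢
  omega

theorem exists_strictAntiOn_enumeration (B : Finset ℕ) : ∃ g : ℕ → ℕ,
    StrictAntiOn g (Set.Iio B.card) ∧ (Multiset.range B.card).map g = B.val ∧
      ∀ i < B.card, Nat.count (· ∈ B) (g i) = B.card - 1 - i := by
  have hlt : ∀ {k}, k < B.card → ∀ hf : (Set.ofPred (· ∈ B)).Finite, k < hf.toFinset.card :=
    fun hk hf => by
      rwa [show hf.toFinset = B by ext; simp]
  have hanti : StrictAntiOn (fun i => Nat.nth (· ∈ B) (B.card - 1 - i)) (Set.Iio B.card) :=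
    fun i (hi : i < B.card) j (hj : j < B.card) hij =>
      Nat.nth_lt_nth' (by omega) (hlt (by omega))
  refine ⟨_, hanti, ?_, fun i hi => Nat.count_nth (hlt (by omega))⟩
  rw [← Finset.coe_range] at hanti
  rw [← Finset.range_val, ← Finset.image_val_of_injOn hanti.injOn]
  refine congrArg Finset.val (Finset.eq_of_subset_of_card_le (fun b hb => ?_) ?_)
  · obtain ⟨i, hi, rfl⟩ := Finset.mem_image.1 hb
    exact Nat.nth_mem _ (hlt (by rw [Finset.mem_range] at hi; omega))
  · rw [Finset.card_image_of_injOn hanti.injOn, Finset.card_range]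

theorem betaSet_ofBeads (B : Finset ℕ) : betaSet (ofBeads B).2 B.card = B := by
  obtain ⟨g, hanti, hmap, hcount⟩ := exists_strictAntiOn_enumeration B
  have hgap : AntitoneOn (Nat.count (· ∉ B) ∘ g) (Set.Iio B.card) :=
    (Nat.count_monotone _).comp_antitoneOn hanti.antitoneOn
  have hrow : Set.EqOn (ofBeads B).row (Nat.count (· ∉ B) ∘ g) (Set.Iio B.card) :=
    eqOn_of_antitoneOn_of_map_range_eq ((antitone_row _).antitoneOn _) hgap
      (by rw [map_row_ofBeads, ← Multiset.map_map, hmap])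
  refine Finset.val_injective ?_
  rw [betaSet_val, ← hmap]
  refine Multiset.map_congr rfl fun i hi => ?_
  rw [Multiset.mem_range] at hi
  rw [hrow hi, ← hcount i hi]
  exact count_notMem_add_count_mem B (g i)

theorem ofBeads_betaSet {p : IntPartition} {N : ℕ} (h : p.2.parts.card ≤ N) :
    ofBeads (betaSet p.2 N) = p := by
  have hcard := card_parts_ofBeads_le (betaSet p.2 N)
  have hbeta := betaSet_ofBeads (betaSet p.2 N)
  rw [card_betaSet] at hcard hbeta
  exact eq_of_betaSet_eq hcard h hbeta

theorem size_ofBeads_add (B : Finset ℕ) :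
    (ofBeads B).1 + ∑ i ∈ Finset.range B.card, i = ∑ b ∈ B, b := by
  rw [← sum_betaSet _ (card_parts_ofBeads_le B), betaSet_ofBeads]

end BetaSet

/-! ### The abacus -/

section Abacus

open IntPartition

theorem zero_mem_betaSet_succ (p : IntPartition) {N : ℕ} (h : p.2.parts.card ≤ N) :
    0 ∈ betaSet p.2 (N + 1) :=
  Finset.mem_image.2 ⟨N, Finset.self_mem_range_succ N, by
    change p.row N + (N + 1 - 1 - N) = 0
    rw [row_eq_zero p h]; omega⟩

theorem succ_mem_betaSet_succ (p : IntPartition) {N b : ℕ} (h : p.2.parts.card ≤ N) :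
    b + 1 ∈ betaSet p.2 (N + 1) ↔ b ∈ betaSet p.2 N := by
  change b + 1 ∈ (Finset.range (N + 1)).image (fun i => p.row i + (N + 1 - 1 - i)) ↔
    b ∈ (Finset.range N).image fun i => p.row i + (N - 1 - i)
  simp only [Finset.mem_image, Finset.mem_range]
  constructor
  · rintro ⟨i, hi, hb⟩
    have hiN : i ≠ N := by rintro rfl; rw [row_eq_zero p h] at hb; omega
    exact ⟨i, by omega, by omega⟩
  · rintro ⟨i, hi, rfl⟩
    exact ⟨i, by omega, by omega⟩

theorem range_subset_betaSet (p : IntPartition) {N k : ℕ} (h : p.2.parts.card + k ≤ N) :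
    Finset.range k ⊆ betaSet p.2 N := by
  induction k generalizing N with
  | zero => simp
  | succ k ih =>
    obtain ⟨N, rfl⟩ : ∃ M, N = M + 1 := ⟨N - 1, by omega⟩
    rintro (_ | b) hb
    · exact zero_mem_betaSet_succ p (by omega)
    · rw [succ_mem_betaSet_succ p (by omega)]
      exact ih (by omega) (by simpa using hb)

/-- On an abacus with `ℓ` runners, no bead of `B` has a vacant position immediately below it on
its own runner. -/
def IsFlush (ℓ : ℕ) (B : Finset ℕ) : Prop := ∀ b ∈ B, ℓ ≤ b → b - ℓ ∈ B

theorem isFlush_betaSet_succ {ℓ : ℕ} (p : IntPartition) {N : ℕ} (h : p.2.parts.card ≤ N) :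
    IsFlush ℓ (betaSet p.2 (N + 1)) ↔ IsFlush ℓ (betaSet p.2 N) := by
  constructor <;> intro hflush
  · intro b hb hℓ
    have := hflush (b + 1) ((succ_mem_betaSet_succ p h).2 hb) (by omega)
    rwa [Nat.sub_add_comm hℓ, succ_mem_betaSet_succ p h] at this
  · intro b hb hℓ
    rcases hℓ.eq_or_lt with rfl | hlt
    · rw [Nat.sub_self]
      exact zero_mem_betaSet_succ p h
    · obtain ⟨b, rfl⟩ : ∃ c, b = c + 1 := ⟨b - 1, by omega⟩
      rw [succ_mem_betaSet_succ p h] at hb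
      rw [Nat.sub_add_comm (by omega), succ_mem_betaSet_succ p h]
      exact hflush b hb (by omega)

theorem isCore_iff_isFlush {ℓ : ℕ} (p : IntPartition) {N : ℕ} (h : p.2.parts.card ≤ N) :
    IsCore ℓ p.2 ↔ IsFlush ℓ (betaSet p.2 N) := by
  have hstable : ∀ M, p.2.parts.card ≤ M →
      (IsFlush ℓ (betaSet p.2 M) ↔ IsFlush ℓ (betaSet p.2 p.2.parts.card)) := fun M hM => by
    induction M, hM using Nat.le_induction with
    | base => rfl
    | succ M hM ih => rw [isFlush_betaSet_succ p hM, ih]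
  exact ⟨fun hcore => hcore N h, fun hflush M hM =>
    (hstable M hM).2 ((hstable N h).1 hflush)⟩

theorem eq_of_ofBeads_eq {B C : Finset ℕ} (hcard : B.card = C.card) (h : ofBeads B = ofBeads C) :
    B = C := by
  rw [← betaSet_ofBeads B, ← betaSet_ofBeads C, h, hcard]

/-- The rows of the `r`-th runner of an `ℓ`-runner abacus occupied by the beads of `B`; position
`k * ℓ + r` lies in row `k`. -/
noncomputable def runner (ℓ : ℕ) (B : Finset ℕ) (r : Fin ℓ) : Finset ℕ :=
  B.preimage (fun k => k * ℓ + r)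
    ((add_left_injective _).comp (mul_left_injective₀ r.pos.ne')).injOn

theorem mem_runner {ℓ : ℕ} {B : Finset ℕ} {r : Fin ℓ} {k : ℕ} :
    k ∈ runner ℓ B r ↔ k * ℓ + r ∈ B :=
  Finset.mem_preimage

theorem range_subset_runner {ℓ : ℕ} (p : IntPartition) {N k : ℕ}
    (h : p.2.parts.card + ℓ * k ≤ N) (r : Fin ℓ) :
    Finset.range k ⊆ runner ℓ (betaSet p.2 N) r := by
  intro i hi
  refine mem_runner.2 (range_subset_betaSet p h (Finset.mem_range.2 ?_))
  calc i * ℓ + r < (i + 1) * ℓ := by rw [add_one_mul]; exact Nat.add_lt_add_left r.isLt _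
    _ ≤ ℓ * k := by
      rw [mul_comm]
      exact Nat.mul_le_mul_left ℓ (Finset.mem_range.1 hi)

variable {ℓ : ℕ} [NeZero ℓ]

theorem sum_eq_sum_runner {M : Type*} [AddCommMonoid M] (B : Finset ℕ) (f : ℕ → M) :
    ∑ b ∈ B, f b = ∑ r, ∑ k ∈ runner ℓ B r, f (k * ℓ + r) := by
  rw [Finset.sum_sigma']
  refine Finset.sum_nbij' (fun b => ⟨Fin.ofNat ℓ b, b / ℓ⟩) (fun x => x.2 * ℓ + x.1) ?_ ?_ ?_ ?_ ?_
  · intro b hb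
    simpa [mem_runner, Nat.div_add_mod'] using hb
  · intro x hx
    simpa [mem_runner] using hx
  · intro b _
    simp [Nat.div_add_mod']
  · rintro ⟨r, k⟩ _
    obtain ⟨hk, hr⟩ := Prod.ext_iff.1 ((Nat.divModEquiv ℓ).right_inv (k, r))
    exact Sigma.ext hr (heq_of_eq hk)
  · intro b _
    simp [Nat.div_add_mod']

theorem eq_of_runner_eq {B C : Finset ℕ} (h : ∀ r, runner ℓ B r = runner ℓ C r) : B = C := by
  ext b
  simpa [mem_runner, Nat.div_add_mod'] using congrArg (b / ℓ ∈ ·) (h (Fin.ofNat ℓ b))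

/-- The set of beads on an `ℓ`-runner abacus whose `r`-th runner is occupied in the rows `C r`. -/
def ofRunners (C : Fin ℓ → Finset ℕ) : Finset ℕ :=
  (Finset.univ.biUnion fun r => (C r).image (·, r)).map (Nat.divModEquiv ℓ).symm.toEmbedding

theorem runner_ofRunners (C : Fin ℓ → Finset ℕ) (r : Fin ℓ) :
    runner ℓ (ofRunners C) r = C r := by
  ext k
  have hpos : k * ℓ + r = (Nat.divModEquiv ℓ).symm.toEmbedding (k, r) := rfl
  rw [mem_runner, ofRunners, hpos, Finset.mem_map']
  simp

theorem eq_range_card_of_succ_mem {S : Finset ℕ} (h : ∀ k, k + 1 ∈ S → k ∈ S) :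
    S = Finset.range S.card := by
  have hinitial : ∀ k ∈ S, Finset.range (k + 1) ⊆ S := fun k => by
    induction k with
    | zero => simp
    | succ k ih =>
      intro hk
      rw [Finset.range_add_one]
      exact Finset.insert_subset hk (ih (h k hk))
  refine Finset.eq_of_subset_of_card_le (fun k hk => ?_) (Finset.card_range _).le
  simpa using Finset.card_le_card (hinitial k hk)

theorem isFlush_iff_runner_eq_range {B : Finset ℕ} :
    IsFlush ℓ B ↔ ∀ r, runner ℓ B r = Finset.range (runner ℓ B r).card := by
  constructor
  · refine fun h r => eq_range_card_of_succ_mem fun k hk => ?_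
    rw [mem_runner] at hk ⊢
    convert h _ hk (by lia) using 1
    lia
  · intro h b hb hℓ
    have hpos : 0 < b / ℓ := Nat.div_pos hℓ (NeZero.pos ℓ)
    have hrow : b / ℓ ∈ runner ℓ B (Fin.ofNat ℓ b) := by
      simpa [mem_runner, Nat.div_add_mod'] using hb
    have hbelow : b / ℓ - 1 ∈ runner ℓ B (Fin.ofNat ℓ b) := by
      rw [h, Finset.mem_range] at hrow ⊢
      omega
    rw [mem_runner] at hbelow
    convert hbelow using 1
    rw [Nat.sub_mul, Fin.val_ofNat, one_mul]
    have := Nat.div_add_mod' b ℓ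
    have := Nat.le_mul_of_pos_left ℓ hpos
    omega

/-- The beads of `B` pushed down as far as possible along the runners of an `ℓ`-runner abacus. -/
noncomputable def pushDown (ℓ : ℕ) [NeZero ℓ] (B : Finset ℕ) : Finset ℕ :=
  ofRunners fun r : Fin ℓ => Finset.range (runner ℓ B r).card

theorem runner_pushDown (B : Finset ℕ) (r : Fin ℓ) :
    runner ℓ (pushDown ℓ B) r = Finset.range (runner ℓ B r).card :=
  runner_ofRunners _ r

theorem isFlush_pushDown (B : Finset ℕ) : IsFlush ℓ (pushDown ℓ B) :=
  isFlush_iff_runner_eq_range.2 fun r => by rw [runner_pushDown, Finset.card_range]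

theorem card_eq_sum_card_runner (B : Finset ℕ) : B.card = ∑ r, (runner ℓ B r).card := by
  simpa using sum_eq_sum_runner (ℓ := ℓ) B (fun _ => (1 : ℕ))

theorem card_pushDown (B : Finset ℕ) : (pushDown ℓ B).card = B.card := by
  rw [card_eq_sum_card_runner (ℓ := ℓ), card_eq_sum_card_runner (ℓ := ℓ) B]
  simp only [runner_pushDown, Finset.card_range]

theorem sum_runners (B : Finset ℕ) : ∑ b ∈ B, b =
    ℓ * ∑ r, ∑ k ∈ runner ℓ B r, k + ∑ r : Fin ℓ, (runner ℓ B r).card * r := by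
  rw [sum_eq_sum_runner (ℓ := ℓ) B fun b => b]
  simp only [Finset.sum_add_distrib, Finset.sum_const, smul_eq_mul, Finset.mul_sum, mul_comm]

theorem size_ofBeads_eq_pushDown_add (B : Finset ℕ) : (ofBeads B).1 =
    (ofBeads (pushDown ℓ B)).1 + ℓ * ∑ r, (ofBeads (runner ℓ B r)).1 := by
  have hB := size_ofBeads_add B
  have hpush := size_ofBeads_add (pushDown ℓ B)
  have hrunner : ∑ r, ∑ k ∈ runner ℓ B r, k = ∑ r, (ofBeads (runner ℓ B r)).1 +
      ∑ r, ∑ i ∈ Finset.range (runner ℓ B r).card, i := by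
    simp_rw [← Finset.sum_add_distrib, size_ofBeads_add]
  rw [sum_runners (ℓ := ℓ) B, hrunner] at hB
  rw [sum_runners (ℓ := ℓ) (pushDown ℓ B), card_pushDown] at hpush
  simp only [runner_pushDown, Finset.card_range] at hpush
  linarith

theorem eq_of_pushDown_eq_of_runner {B C : Finset ℕ} (hpush : pushDown ℓ B = pushDown ℓ C)
    (hrunner : ∀ r, ofBeads (runner ℓ B r) = ofBeads (runner ℓ C r)) : B = C := by
  refine eq_of_runner_eq (ℓ := ℓ) fun r => eq_of_ofBeads_eq ?_ (hrunner r)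
  have hr := congrArg (fun D => (runner ℓ D r).card) hpush
  simpa only [runner_pushDown, Finset.card_range] using hr

theorem pushDown_eq_self {B : Finset ℕ} (h : IsFlush ℓ B) : pushDown ℓ B = B :=
  eq_of_runner_eq (ℓ := ℓ) fun r => by
    rw [runner_pushDown, ← isFlush_iff_runner_eq_range.1 h r]

end Abacus

/-! ### Cores and quotients -/

namespace IntPartition

variable (ℓ : ℕ)

/-- The beads of `p` on an abacus with `ℓ` runners. Using `ℓ * |p|` beads makes their number a
multiple of `ℓ` that is at least the number of parts and depends only on `ℓ` and `|p|`. -/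
def beads (p : IntPartition) : Finset ℕ := betaSet p.2 (ℓ * p.1)

/-- The `ℓ`-quotient of a partition, read off the runners of its abacus. -/
noncomputable def quotient (p : IntPartition) (r : Fin ℓ) : IntPartition :=
  ofBeads (runner ℓ (beads ℓ p) r)

variable [NeZero ℓ]

/-- The `ℓ`-core of a partition, obtained by pushing down all beads of its abacus. -/
noncomputable def core (p : IntPartition) : IntPartition := ofBeads (pushDown ℓ (beads ℓ p))

theorem card_parts_le_mul_size (p : IntPartition) : p.2.parts.card ≤ ℓ * p.1 :=
  p.card_parts_le_size.trans (Nat.le_mul_of_pos_left _ (NeZero.pos ℓ))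

theorem isCore_core (p : IntPartition) : IsCore ℓ (core ℓ p).2 := by
  rw [core, isCore_iff_isFlush _ (card_parts_ofBeads_le _), betaSet_ofBeads]
  exact isFlush_pushDown _

theorem size_eq_core_add_quotient (p : IntPartition) :
    p.1 = (core ℓ p).1 + ℓ * ∑ r, (quotient ℓ p r).1 := by
  rw [core, funext (quotient.eq_1 ℓ p), ← size_ofBeads_eq_pushDown_add, beads,
    ofBeads_betaSet (card_parts_le_mul_size ℓ p)]

variable {ℓ}

theorem eq_of_core_eq_of_quotient_eq {p q : IntPartition} (hcore : core ℓ p = core ℓ q)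
    (hquot : quotient ℓ p = quotient ℓ q) : p = q := by
  have hsize : p.1 = q.1 := by
    rw [size_eq_core_add_quotient ℓ p, size_eq_core_add_quotient ℓ q, hcore, hquot]
  have hpush : pushDown ℓ (beads ℓ p) = pushDown ℓ (beads ℓ q) :=
    eq_of_ofBeads_eq (by simp only [card_pushDown, beads, card_betaSet, hsize]) hcore
  have hbeads : beads ℓ p = beads ℓ q := eq_of_pushDown_eq_of_runner hpush (congrFun hquot)
  rw [← ofBeads_betaSet (card_parts_le_mul_size ℓ p),
    ← ofBeads_betaSet (card_parts_le_mul_size ℓ q)]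
  exact congrArg ofBeads hbeads

theorem card_parts_le_card_runner (p q : IntPartition) {n : ℕ} (h : p.1 + q.1 ≤ n) (r : Fin ℓ) :
    q.2.parts.card ≤ (runner ℓ (betaSet p.2 (ℓ * n)) r).card := by
  have hrows : p.2.parts.card + ℓ * q.1 ≤ ℓ * n :=
    calc p.2.parts.card + ℓ * q.1 ≤ ℓ * p.1 + ℓ * q.1 :=
          Nat.add_le_add_right (card_parts_le_mul_size ℓ p) _
      _ ≤ ℓ * n := by
          rw [← mul_add]
          exact Nat.mul_le_mul_left ℓ h
  calc q.2.parts.card ≤ (Finset.range q.1).card := by simpa using q.card_parts_le_size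
    _ ≤ _ := Finset.card_le_card (range_subset_runner p hrows r)

theorem exists_core_eq_quotient_eq {κ : IntPartition} (hκ : IsCore ℓ κ.2)
    (ν : Fin ℓ → IntPartition) : ∃ p, core ℓ p = κ ∧ quotient ℓ p = ν := by
  set n := κ.1 + ℓ * ∑ r, (ν r).1 with hn
  have hcard : κ.2.parts.card ≤ ℓ * n :=
    (card_parts_le_mul_size ℓ κ).trans (Nat.mul_le_mul_left ℓ (by omega))
  have hroom : ∀ r, (ν r).2.parts.card ≤ (runner ℓ (betaSet κ.2 (ℓ * n)) r).card := fun r => by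
    have hle : (ν r).1 ≤ ∑ r, (ν r).1 :=
      Finset.single_le_sum (f := fun r => (ν r).1) (fun _ _ => Nat.zero_le _) (Finset.mem_univ r)
    have hmul : ∑ r, (ν r).1 ≤ ℓ * ∑ r, (ν r).1 := Nat.le_mul_of_pos_left _ (NeZero.pos ℓ)
    exact card_parts_le_card_runner κ (ν r) (by omega) r
  have hflush : pushDown ℓ (betaSet κ.2 (ℓ * n)) = betaSet κ.2 (ℓ * n) :=
    pushDown_eq_self ((isCore_iff_isFlush κ hcard).1 hκ)
  set B : Finset ℕ := ofRunners fun r =>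
    betaSet (ν r).2 (runner ℓ (betaSet κ.2 (ℓ * n)) r).card with hB
  have hpush : pushDown ℓ B = betaSet κ.2 (ℓ * n) := by
    rw [← hflush]
    simp only [pushDown, hB, runner_ofRunners, card_betaSet]
  have hrunner : ∀ r, ofBeads (runner ℓ B r) = ν r := fun r => by
    rw [hB, runner_ofRunners, ofBeads_betaSet (hroom r)]
  have hsize : (ofBeads B).1 = n := by
    rw [size_ofBeads_eq_pushDown_add (ℓ := ℓ), hpush, ofBeads_betaSet hcard]
    simp only [hrunner, hn]
  have hbeads : beads ℓ (ofBeads B) = B := by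
    have : ℓ * (ofBeads B).1 = B.card := by
      rw [hsize, ← card_pushDown (ℓ := ℓ), hpush, card_betaSet]
    rw [beads, this, betaSet_ofBeads]
  refine ⟨ofBeads B, ?_, funext fun r => ?_⟩
  · rw [core, hbeads, hpush, ofBeads_betaSet hcard]
  · rw [quotient, hbeads, hrunner]

end IntPartition

/-! ### Core towers -/

section ListSums

variable {α M : Type*}

/-- A word is either empty or a letter followed by a word. -/
def listConsEquiv (α : Type*) : Option (α × List α) ≃ List α where
  toFun := fun x => x.elim [] fun y => y.1 :: y.2
  invFun
    | [] => none
    | a :: s => some (a, s)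
  left_inv := by rintro (_ | _) <;> rfl
  right_inv := by rintro (_ | _) <;> rfl

theorem finsum_list [Fintype α] [AddCommMonoid M] (f : List α → M)
    (hf : f.HasFiniteSupport) : ∑ᶠ s, f s = f [] + ∑ a, ∑ᶠ s, f (a :: s) := by
  have hcons : (fun x : α × List α => f (x.1 :: x.2)).HasFiniteSupport :=
    Set.Finite.preimage (f := fun x : α × List α => x.1 :: x.2)
      (fun _ _ _ _ h => Prod.ext (List.cons.inj h).1 (List.cons.inj h).2) hf
  calc ∑ᶠ s, f s = f [] + ∑ᶠ x : α × List α, f (x.1 :: x.2) := by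
        rw [← finsum_comp_equiv (listConsEquiv α), finsum_option hcons]
        rfl
    _ = f [] + ∑ a, ∑ᶠ s, f (a :: s) := by
        rw [finsum_curry _ hcons, finsum_eq_sum_of_fintype]

end ListSums

namespace IntPartition

section CoreTower

variable (ℓ : ℕ) [NeZero ℓ]

/-- The `ℓ`-core tower of a partition `p`: the core attached to the word `r₁ r₂ ⋯ r_d` is the core
of the `r_d`-th component of the quotient of … of the `r₁`-th component of the quotient of `p`. -/
noncomputable def coreTower : IntPartition → List (Fin ℓ) → IntPartition
  | p, [] => core ℓ p
  | p, r :: s => coreTower (quotient ℓ p r) s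

theorem isCore_coreTower (p : IntPartition) (s : List (Fin ℓ)) : IsCore ℓ (coreTower ℓ p s).2 := by
  induction s generalizing p with
  | nil => exact isCore_core ℓ p
  | cons r _ ih => exact ih (quotient ℓ p r)

end CoreTower

variable (ℓ : ℕ) [ℓ.AtLeastTwo]

theorem two_mul_size_quotient_le (p : IntPartition) (r : Fin ℓ) : 2 * (quotient ℓ p r).1 ≤ p.1 :=
  calc 2 * (quotient ℓ p r).1 ≤ ℓ * ∑ r, (quotient ℓ p r).1 :=
        Nat.mul_le_mul Nat.AtLeastTwo.prop <| Finset.single_le_sum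
          (f := fun r => (quotient ℓ p r).1) (fun _ _ => Nat.zero_le _) (Finset.mem_univ r)
    _ ≤ p.1 := (Nat.le_add_left _ _).trans (size_eq_core_add_quotient ℓ p).ge

theorem size_coreTower_eq_zero {p : IntPartition} {s : List (Fin ℓ)} (h : p.1 ≤ s.length) :
    (coreTower ℓ p s).1 = 0 := by
  induction s generalizing p with
  | nil =>
    have := size_eq_core_add_quotient ℓ p
    rw [List.length_nil] at h
    exact Nat.eq_zero_of_le_zero (by rw [coreTower]; omega)
  | cons r s ih =>
    have := two_mul_size_quotient_le ℓ p r
    rw [List.length_cons] at h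
    exact ih (by omega)

theorem finite_support_coreTower (p : IntPartition) : {s | (coreTower ℓ p s).1 ≠ 0}.Finite :=
  (List.finite_length_lt (Fin ℓ) p.1).subset fun _ hs =>
    not_le.1 fun h => hs (size_coreTower_eq_zero ℓ h)

theorem finsum_coreTower (p : IntPartition) :
    ∑ᶠ s : List (Fin ℓ), ℓ ^ s.length * (coreTower ℓ p s).1 = p.1 := by
  induction hp : p.1 using Nat.strong_induction_on generalizing p with
  | _ n ih =>
    subst hp
    rcases Nat.eq_zero_or_pos p.1 with hzero | hpos
    · simp [size_coreTower_eq_zero ℓ (hzero.trans_le (Nat.zero_le _)), hzero]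
    · have hquot : ∀ r, ∑ᶠ s : List (Fin ℓ), ℓ ^ s.length * (coreTower ℓ (quotient ℓ p r) s).1 =
          (quotient ℓ p r).1 := fun r =>
        ih _ (by have := two_mul_size_quotient_le ℓ p r; omega) _ rfl
      have hsupp : (fun s : List (Fin ℓ) => ℓ ^ s.length * (coreTower ℓ p s).1).HasFiniteSupport :=
        (finite_support_coreTower ℓ p).subset fun _ => right_ne_zero_of_mul
      rw [finsum_list _ hsupp]
      simp only [coreTower, List.length_nil, List.length_cons, pow_zero, one_mul, pow_succ',
        mul_assoc, ← mul_finsum, hquot, ← Finset.mul_sum]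
      exact (size_eq_core_add_quotient ℓ p).symm

theorem coreTower_injective : Function.Injective (coreTower ℓ) := by
  have hbound : ∀ d, ∀ p q : IntPartition, p.1 ≤ d → q.1 ≤ d →
      coreTower ℓ p = coreTower ℓ q → p = q := fun d => by
    induction d with
    | zero => exact fun p q hp hq _ => eq_of_size_eq_zero (by omega) (by omega)
    | succ d ih =>
      intro p q hp hq h
      refine eq_of_core_eq_of_quotient_eq (congrFun h []) (funext fun r => ih _ _ ?_ ?_ ?_)
      · have := two_mul_size_quotient_le ℓ p r
        omega
      · have := two_mul_size_quotient_le ℓ q r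
        omega
      · exact funext fun s => congrFun h (r :: s)
  exact fun p q => hbound (max p.1 q.1) p q (le_max_left _ _) (le_max_right _ _)

theorem exists_coreTower_eq {w : List (Fin ℓ) → IntPartition} (hcore : ∀ s, IsCore ℓ (w s).2)
    (hfin : {s | (w s).1 ≠ 0}.Finite) : ∃ p, coreTower ℓ p = w := by
  have hbound : ∀ d, ∀ w : List (Fin ℓ) → IntPartition, (∀ s, IsCore ℓ (w s).2) →
      (∀ s, d ≤ s.length → (w s).1 = 0) → ∃ p, coreTower ℓ p = w := fun d => by
    induction d with
    | zero =>
      intro w _ hw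
      have hzero : ∀ s, (w s).1 = 0 := fun s => hw s (Nat.zero_le _)
      exact ⟨w [], funext fun s => eq_of_size_eq_zero
        (size_coreTower_eq_zero ℓ ((hzero []).trans_le (Nat.zero_le _))) (hzero s)⟩
    | succ d ih =>
      intro w hcore hw
      choose ν hν using fun r => ih (fun s => w (r :: s)) (fun s => hcore (r :: s))
        fun s hs => hw (r :: s) (Nat.succ_le_succ hs)
      obtain ⟨p, hp, hquot⟩ := exists_core_eq_quotient_eq (hcore []) ν
      refine ⟨p, funext fun s => ?_⟩
      cases s with
      | nil => exact hp
      | cons r s => rw [coreTower, hquot, hν]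
  obtain ⟨D, hD⟩ := (hfin.image List.length).bddAbove
  refine hbound (D + 1) w hcore fun s hs => by_contra fun h => ?_
  have : s.length ≤ D := hD ⟨s, h, rfl⟩
  omega

end IntPartition

section CoreFamilies

open IntPartition

/-- The finitely supported families `w` of `ℓ`-cores on an index set with a degree function, of
weighted size `∑ᵢ ℓ ^ deg i * |w i| = n`. -/
def coreFamilies (ℓ : ℕ) {I : Type*} (deg : I → ℕ) (n : ℕ) : Set (I → IntPartition) :=
  {w | (∀ i, IsCore ℓ (w i).2) ∧ {i | (w i).1 ≠ 0}.Finite ∧ ∑ᶠ i, ℓ ^ deg i * (w i).1 = n}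

theorem ncard_coreFamilies_congr {ℓ : ℕ} {I J : Type*} {degI : I → ℕ} {degJ : J → ℕ} (e : I ≃ J)
    (hdeg : ∀ i, degJ (e i) = degI i) (n : ℕ) :
    (coreFamilies ℓ degI n).ncard = (coreFamilies ℓ degJ n).ncard := by
  refine (Nat.card_congr ((e.symm.arrowCongr (Equiv.refl _)).subtypeEquiv fun w => ?_)).symm
  have hsum : ∑ᶠ i, ℓ ^ degI i * (w (e i)).1 = ∑ᶠ i, ℓ ^ degJ i * (w i).1 := by
    simp only [← hdeg]
    exact finsum_comp_equiv e (f := fun i => ℓ ^ degJ i * (w i).1)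
  have hfin : {i | (w (e i)).1 ≠ 0}.Finite ↔ {i | (w i).1 ≠ 0}.Finite :=
    ⟨fun h => h.of_preimage (s := {i | (w i).1 ≠ 0}) e.surjective,
      fun h => h.preimage e.injective.injOn⟩
  exact and_congr e.forall_congr_right.symm (and_congr hfin.symm (by rw [← hsum]; rfl))

theorem ncard_coreFamilies_prod_list (ℓ : ℕ) [ℓ.AtLeastTwo] (ι : Type*) [Fintype ι] (n : ℕ) :
    (coreFamilies ℓ (fun i : ι × List (Fin ℓ) => i.2.length) n).ncard =
      {p : ι → IntPartition | ∑ x, (p x).1 = n}.ncard := by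
  have hfin : ∀ p : ι → IntPartition,
      {i : ι × List (Fin ℓ) | (coreTower ℓ (p i.1) i.2).1 ≠ 0}.Finite := fun p =>
    (Set.finite_iUnion fun x =>
      (finite_support_coreTower ℓ (p x)).image (Prod.mk x)).subset fun i hi =>
        Set.mem_iUnion.2 ⟨i.1, i.2, hi, rfl⟩
  have hsum : ∀ p : ι → IntPartition,
      ∑ᶠ i : ι × List (Fin ℓ), ℓ ^ i.2.length * (coreTower ℓ (p i.1) i.2).1 = ∑ x, (p x).1 :=
    fun p => by
      have hsupp := (hfin p).subset fun i (hi : ℓ ^ i.2.length * _ ≠ 0) => right_ne_zero_of_mul hi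
      rw [finsum_curry _ hsupp, finsum_eq_sum_of_fintype]
      exact Finset.sum_congr rfl fun x _ => finsum_coreTower ℓ (p x)
  have hbij : Set.BijOn (fun (p : ι → IntPartition) (i : ι × List (Fin ℓ)) =>
      coreTower ℓ (p i.1) i.2) {p | ∑ x, (p x).1 = n} (coreFamilies ℓ (fun i => i.2.length) n) := by
    refine ⟨fun p hp => ⟨fun i => isCore_coreTower ℓ _ _, hfin p, (hsum p).trans hp⟩, ?_, ?_⟩
    · exact fun p _ q _ h => funext fun x =>
        coreTower_injective ℓ (funext fun s => congrFun h (x, s))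
    · rintro w ⟨hcore, hw, hn⟩
      choose p hp using fun x => exists_coreTower_eq ℓ (fun s => hcore (x, s))
        (hw.preimage (Prod.mk_right_injective x).injOn)
      obtain rfl : (fun i => coreTower ℓ (p i.1) i.2) = w := funext fun i => congrFun (hp i.1) i.2
      exact ⟨p, (hsum p).symm.trans hn, rfl⟩
  exact hbij.ncard_eq.symm

end CoreFamilies

/-! ### Labels as words -/

section Labels

variable {m : ℕ}

/-- The labels `(a, 𝔠, j)` of the theorem, without the component `x`, for `m = ℓ - 1`. -/
abbrev Label (m : ℕ) := ℕ × Σ c : List ℕ+, Fin (m ^ c.length)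

namespace Label

/-- The exponent `a + |𝔠|` with which a label enters the weight condition. -/
def degree (k : Label m) : ℕ := k.1 + csum k.2.1

/-- Prepend a letter to a label, over an alphabet of `m + 1` letters: `none` increases `a` by one,
while `some i` moves `a + 1` to the front of `𝔠`, resets `a` and appends `i` to the base-`m` digits
of `j`. -/
def cons : Option (Fin m) → Label m → Label m
  | none, (a, x) => (a + 1, x)
  | some i, (a, ⟨c, j⟩) => (0, ⟨a.succPNat :: c, finProdFinEquiv (j, i)⟩)

/-- The label spelled by a word. -/
def ofWord (s : List (Option (Fin m))) : Label m := s.foldr cons (0, ⟨[], ⟨0, Nat.one_pos⟩⟩)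

theorem degree_cons (x : Option (Fin m)) (k : Label m) : (cons x k).degree = k.degree + 1 := by
  obtain ⟨a, c, j⟩ := k
  cases x <;> simp [cons, degree, csum] <;> omega

theorem degree_ofWord (s : List (Option (Fin m))) : (ofWord s).degree = s.length := by
  induction s with
  | nil => rfl
  | cons x s ih => exact (degree_cons x (ofWord s)).trans (congrArg (· + 1) ih)

theorem cons_injective2 : Function.Injective2 (cons (m := m)) := by
  rintro (_ | i) (_ | i') ⟨a, c, j⟩ ⟨a', c', j'⟩ h
  · simpa [cons] using h
  · simp [cons] at h
  · simp [cons] at h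
  · obtain ⟨hc, hj⟩ := Sigma.mk.inj (Prod.mk.inj h).2
    obtain ⟨ha, rfl⟩ := List.cons.inj hc
    obtain rfl := Nat.succPNat_injective ha
    obtain ⟨rfl, rfl⟩ := Prod.mk.inj (finProdFinEquiv.injective (eq_of_heq hj))
    exact ⟨rfl, rfl⟩

theorem exists_cons_eq {k : Label m} (hk : k.degree ≠ 0) : ∃ x k', cons x k' = k := by
  obtain ⟨_ | a, c, j⟩ := k
  · cases c with
    | nil => exact absurd rfl hk
    | cons b c =>
      obtain ⟨⟨j', i⟩, rfl⟩ := (finProdFinEquiv (m := m ^ c.length) (n := m)).surjective j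
      refine ⟨some i, (b.natPred, ⟨c, j'⟩), ?_⟩
      rw [cons, PNat.succPNat_natPred]
  · exact ⟨none, (a, ⟨c, j⟩), rfl⟩

theorem eq_ofWord_nil {k : Label m} (hk : k.degree = 0) : k = ofWord [] := by
  obtain ⟨a, _ | ⟨b, c⟩, j⟩ := k
  · obtain rfl : a = 0 := hk
    obtain rfl : j = ⟨0, Nat.one_pos⟩ := Subsingleton.elim (α := Fin 1) _ _
    rfl
  · have := b.pos
    simp [degree, csum] at hk

theorem ofWord_bijective : Function.Bijective (ofWord (m := m)) := by
  constructor
  · intro s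
    induction s with
    | nil =>
      intro t h
      have := congrArg degree h
      rw [degree_ofWord, degree_ofWord] at this
      exact (List.length_eq_zero_iff.1 this.symm).symm
    | cons x s ih =>
      rintro (_ | ⟨y, t⟩) h
      · have := congrArg degree h
        simp [degree_ofWord] at this
      · obtain ⟨rfl, hst⟩ := cons_injective2 h
        rw [ih hst]
  · intro k
    induction hd : k.degree generalizing k with
    | zero => exact ⟨[], (eq_ofWord_nil hd).symm⟩
    | succ d ih =>
      obtain ⟨x, k, rfl⟩ := exists_cons_eq (k := k) (by omega)
      rw [degree_cons] at hd
      obtain ⟨s, rfl⟩ := ih k (by omega)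
      exact ⟨x :: s, rfl⟩

theorem exists_equiv_words {ℓ : ℕ} (hℓ : 0 < ℓ) :
    ∃ e : Label (ℓ - 1) ≃ List (Fin ℓ), ∀ k, (e k).length = k.degree := by
  have hletters : Fintype.card (Option (Fin (ℓ - 1))) = ℓ := by
    rw [Fintype.card_option, Fintype.card_fin]
    omega
  refine ⟨(Equiv.ofBijective _ ofWord_bijective).symm.trans
    (Equiv.listEquivOfEquiv (Fintype.equivFinOfCardEq hletters)), fun k => ?_⟩
  obtain ⟨s, rfl⟩ := ofWord_bijective.2 k
  rw [Equiv.trans_apply, Equiv.ofBijective_symm_apply_apply, degree_ofWord]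
  simp [Equiv.listEquivOfEquiv]

end Label

end Labels

theorem weight_count_Sp_SO_odd_general (ℓ : ℕ) (hℓ : 1 < ℓ) (ι : Type*) [Fintype ι] (n : ℕ) :
    Set.ncard { w : (ℕ × ι × Σ c : List ℕ+, Fin ((ℓ - 1) ^ c.length)) → IntPartition |
      (∀ i, IsCore ℓ (w i).2) ∧
      { i | (w i).1 ≠ 0 }.Finite ∧
      ∑ᶠ i : ℕ × ι × Σ c : List ℕ+, Fin ((ℓ - 1) ^ c.length),
        ℓ ^ (i.1 + csum i.2.2.1) * (w i).1 = n } =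
    Set.ncard { p : ι → IntPartition | ∑ x, (p x).1 = n } := by
  have : ℓ.AtLeastTwo := ⟨hℓ⟩
  obtain ⟨word, hword⟩ := Label.exists_equiv_words (ℓ := ℓ) (by omega)
  let e : (ℕ × ι × Σ c : List ℕ+, Fin ((ℓ - 1) ^ c.length)) ≃ ι × List (Fin ℓ) :=
    { toFun := fun i => (i.2.1, word (i.1, i.2.2))
      invFun := fun x => ((word.symm x.2).1, x.1, (word.symm x.2).2)
      left_inv := fun i => by simp
      right_inv := fun x => by simp }
  exact (ncard_coreFamilies_congr e (fun i => hword (i.1, i.2.2)) n).trans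
    (ncard_coreFamilies_prod_list ℓ ι n)

theorem ncard_bipartitions (n : ℕ) :
    Set.ncard { p : Fin 2 → IntPartition | ∑ x, (p x).1 = n } =
      Set.ncard { pq : IntPartition × IntPartition | pq.1.1 + pq.2.1 = n } :=
  Nat.card_congr <| (finTwoArrowEquiv IntPartition).subtypeEquiv fun p => by
    simp [Fin.sum_univ_two]

/-- Let `ℓ` be an odd prime and `n` a natural number.  The number of finitely supported
functions `w` assigning to each quadruple `(a, x, 𝔠, j)` — with `a ∈ ℕ`, `x ∈ {0,1}`,
`𝔠 ∈ 𝒞` a finite sequence of positive integers, and `j` ranging over `(ℓ-1)^{t(𝔠)}`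
values — an `ℓ`-core partition `w (a, x, 𝔠, j)`, subject to
`∑ ℓ^{a + |𝔠|} * |w (a, x, 𝔠, j)| = n`, equals the number of bipartitions of `n`. -/
theorem weight_count_Sp_SO_odd (ℓ : ℕ) (hℓ : ℓ.Prime) (hodd : Odd ℓ) (n : ℕ) :
    Set.ncard { w : (ℕ × Fin 2 × Σ c : List ℕ+, Fin ((ℓ - 1) ^ c.length)) →
        Σ m : ℕ, Nat.Partition m |
      (∀ i, IsCore ℓ (w i).2) ∧
      { i | (w i).1 ≠ 0 }.Finite ∧
      ∑ᶠ i : ℕ × Fin 2 × Σ c : List ℕ+, Fin ((ℓ - 1) ^ c.length),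
        ℓ ^ (i.1 + csum i.2.2.1) * (w i).1 = n } =
    Set.ncard { pq : (Σ m : ℕ, Nat.Partition m) × (Σ m : ℕ, Nat.Partition m) |
      pq.1.1 + pq.2.1 = n } :=
  (weight_count_Sp_SO_odd_general ℓ hℓ.one_lt (Fin 2) n).trans (ncard_bipartitions n)
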